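/- With the Lie-algebra setup below (Case B), let the bracket be [x₁,x₂] = λ₁x₁ + λ₂x₂ − (λ₁+λ₂)x₃, [x₂,x₃] = −(λ₁+λ₂)x₁ + λ₁x₂ + λ₂x₃, [x₁,x₃] = −λ₂x₁ + (λ₁+λ₂)x₂ − λ₁x₃ for real constants λ₁, λ₂. Then: (1) this bracket satisfies the Jacobi identity; (2) F(x₁,x₁,x₁) = F(x₂,x₂,x₂) = F(x₃,x₃,x₃) = 2(λ₁ − λ₂), θ₁ = θ₂ = θ₃ = 3(λ₁ − λ₂), and θ*₁ = θ*₂ = θ*₃ = (3/2)(λ₂ − λ₁); (3) R(x₁,x₂,x₁,x₂) = R(x₁,x₃,x₁,x₃) = R(x₂,x₃,x₂,x₃) = (3/4)(λ₁ − λ₂)²; (4) ρ(xᵢ,xⱼ) = −(3/2)(λ₁ − λ₂)² if i = j and 0 if i ≠ j, the scalar curvature is τ = −(9/2)(λ₁ − λ₂)², and ρ = (τ/3)·g, i.e. the manifold is Einstein; (5) for every pair of linearly independent vectors x, y ∈ ℝ³ the sectional curvature k(x,y) = R(x,y,x,y)/(g(x,x)g(y,y) − g(x,y)²) equals (3/4)(λ₁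 − λ₂)². -/

import Mathlib

open scoped BigOperators

/-- The underlying vector space ℝ³. -/
abbrev V := Fin 3 → ℝ

/-- The standard basis `x₁, x₂, x₃` of ℝ³ (indexed from 0). -/
def e (i : Fin 3) : V := Pi.single i 1

/-- The standard inner product `g` on ℝ³ (the basis `e` is orthonormal). -/
def ip (x y : V) : ℝ := ∑ i, x i * y i

/-- The circulant structure `Q`: `Q x₁ = x₂`, `Q x₂ = x₃`, `Q x₃ = x₁`. -/
def Qv (x : V) : V := fun j => x (j - 1)

/-- The associated metric `g̃(y,z) = g(y,Qz) + g(Qy,z)`. -/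
def gtil (x y : V) : ℝ := ip x (Qv y) + ip (Qv x) y

/-- Bilinearity of a map `V → V → V`. -/
def Bilin (f : V → V → V) : Prop :=
  (∀ (a : ℝ) (x y z : V), f (a • x + y) z = a • f x z + f y z) ∧
  (∀ (a : ℝ) (x y z : V), f x (a • y + z) = a • f x y + f x z)

/-- Skew-symmetry of a map `V → V → V`. -/
def Skew (f : V → V → V) : Prop := ∀ x y, f x y = - f y x

/-- The Jacobi identity for a bracket. -/
def Jacobi (br : V → V → V) : Prop :=
  ∀ x y z, br x (br y z) + br y (br z x) + br z (br x y) = 0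

/-- The Koszul formula determining the Levi-Civita connection `∇` of the
left-invariant metric `g` on the basis:
`2g(∇_{xᵢ}xⱼ, xₖ) = g([xᵢ,xⱼ],xₖ) + g([xₖ,xᵢ],xⱼ) + g([xₖ,xⱼ],xᵢ)`. -/
def Koszul (br nabla : V → V → V) : Prop :=
  ∀ i j k : Fin 3, 2 * ip (nabla (e i) (e j)) (e k) =
    ip (br (e i) (e j)) (e k) + ip (br (e k) (e i)) (e j) + ip (br (e k) (e j)) (e i)

/-- The curvature operator `R(x,y)z = ∇ₓ∇_y z − ∇_y∇ₓz − ∇_{[x,y]}z`. -/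
def Rop (br nabla : V → V → V) (x y z : V) : V :=
  nabla x (nabla y z) - nabla y (nabla x z) - nabla (br x y) z

/-- The curvature tensor of type (0,4): `R(x,y,z,u) = g(R(x,y)z, u)`. -/
def Rten (br nabla : V → V → V) (x y z u : V) : ℝ := ip (Rop br nabla x y z) u

/-- The Ricci tensor `ρ(y,z) = Σᵢ R(xᵢ,y,z,xᵢ)`. -/
def ricci (br nabla : V → V → V) (y z : V) : ℝ := ∑ i, Rten br nabla (e i) y z (e i)

/-- The scalar curvature `τ = Σᵢ ρ(xᵢ,xᵢ)`. -/
def scalc (br nabla : V → V → V) : ℝ := ∑ i, ricci br nabla (e i) (e i)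

/-- The fundamental tensor `F(x,y,z) = −g̃(∇ₓy, z) − g̃(y, ∇ₓz)`
(the covariant derivative of `g̃`, which has constant components in this frame). -/
def Fop (nabla : V → V → V) (x y z : V) : ℝ := -(gtil (nabla x y) z) - gtil y (nabla x z)

/-- The Lee form `θₖ = Σᵢ F(xᵢ,xᵢ,xₖ)`. -/
def lee (nabla : V → V → V) (k : Fin 3) : ℝ := ∑ i, Fop nabla (e i) (e i) (e k)

/-- The Lee form `θ*ₖ = Σᵢ F(xᵢ,Qxᵢ,xₖ)`. -/
def leeStar (nabla : V → V → V) (k : Fin 3) : ℝ := ∑ i, Fop nabla (e i) (Qv (e i)) (e k)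

/-!
On `ℝ³` one has `Q + Q² = J - I` with `J` the all-ones matrix, so with `w = (1, 1, 1)` the
associated metric is `g̃(x, y) = g(w, x) g(w, y) - g(x, y)`. In the same terms the bracket of
case B reads `[x, y] = g(w, x) D y - g(w, y) D x`, where `D = A - c`, the map `A` is a multiple of
the infinitesimal rotation about `w`, and `c = (λ₁ - λ₂) / 2`. This is a semidirect product
`ℝ ⋉ ℝ²` in which `ℝ` acts by similarities, that is, hyperbolic space as a Lie group (flat if
`c = 0`). For every skew-adjoint `A` killing `w` its Levi-Civita connection is
`∇ₓ y = g(w, x) A y + c (g(w, y) x - g(x, y) w)`: the rotation term does not contribute to the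
curvature, which is therefore constant.
-/

open scoped Matrix

section Basis

lemma ip_eq_dotProduct (x y : V) : ip x y = x ⬝ᵥ y := rfl

lemma e_dotProduct (i : Fin 3) (x : V) : e i ⬝ᵥ x = x i := single_one_dotProduct i x

lemma dotProduct_e (x : V) (i : Fin 3) : x ⬝ᵥ e i = x i := dotProduct_single_one x i

lemma e_apply (i j : Fin 3) : e i j = if j = i then 1 else 0 := Pi.single_apply i 1 j

lemma e_dotProduct_e (i j : Fin 3) : e i ⬝ᵥ e j = if i = j then 1 else 0 := by
  rw [dotProduct_e, e_apply]
  simp only [eq_comm]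

lemma sum_dotProduct_e_mul_e_dotProduct (x y : V) :
    ∑ i, (x ⬝ᵥ e i) * (e i ⬝ᵥ y) = x ⬝ᵥ y := by
  simp only [dotProduct_e, e_dotProduct]
  rfl

lemma Qv_e (i : Fin 3) : Qv (e i) = e (i + 1) := by
  ext k
  simp only [Qv, e_apply, sub_eq_iff_eq_add]

end Basis

section Bilinear

lemma Bilin.exists_linearMap {f : V → V → V} (hf : Bilin f) :
    ∃ B : V →ₗ[ℝ] V →ₗ[ℝ] V, ∀ x y, B x y = f x y := by
  obtain ⟨hl, hr⟩ := hf
  have zero_left (z : V) : f 0 z = 0 := by simpa using hl 1 0 0 z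
  have zero_right (z : V) : f z 0 = 0 := by simpa using hr 1 z 0 0
  refine ⟨LinearMap.mk₂ ℝ f (fun x y z => ?_) (fun a x z => ?_) (fun z x y => ?_)
    (fun a z x => ?_), fun x y => rfl⟩
  · simpa using hl 1 x y z
  · simpa [zero_left] using hl a x 0 z
  · simpa using hr 1 z x y
  · simpa [zero_right] using hr a z x 0

lemma Bilin.ext_basis {f f' : V → V → V} (hf : Bilin f) (hf' : Bilin f')
    (h : ∀ i j, f (e i) (e j) = f' (e i) (e j)) : f = f' := by
  obtain ⟨B, hB⟩ := hf.exists_linearMap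
  obtain ⟨B', hB'⟩ := hf'.exists_linearMap
  have hBB' : B = B' := LinearMap.ext_basis (Pi.basisFun ℝ (Fin 3)) (Pi.basisFun ℝ (Fin 3))
    fun i j => by simpa only [Pi.basisFun_apply, hB, hB', e] using h i j
  funext x y
  rw [← hB, ← hB', hBB']

lemma Skew.apply_self {f : V → V → V} (hf : Skew f) (x : V) : f x x = 0 :=
  self_eq_neg.mp (hf x x)

lemma Bilin.ext_of_skew {f f' : V → V → V} (hf : Bilin f) (hf' : Bilin f') (hs : Skew f)
    (hs' : Skew f') (h : ∀ i j, i < j → f (e i) (e j) = f' (e i) (e j)) : f = f' := by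
  refine hf.ext_basis hf' fun i j => ?_
  rcases lt_trichotomy i j with hij | rfl | hji
  · exact h i j hij
  · rw [hs.apply_self, hs'.apply_self]
  · rw [hs, hs', h j i hji]

lemma Koszul.unique {br nabla nabla' : V → V → V} (h : Koszul br nabla) (h' : Koszul br nabla')
    (hb : Bilin nabla) (hb' : Bilin nabla') : nabla = nabla' := by
  refine hb.ext_basis hb' fun i j => funext fun k => ?_
  have hk : 2 * ip (nabla (e i) (e j)) (e k) = 2 * ip (nabla' (e i) (e j)) (e k) :=
    (h i j k).trans (h' i j k).symm
  simpa only [ip_eq_dotProduct, dotProduct_e, mul_right_inj' (two_ne_zero' ℝ)] using hk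

end Bilinear

section ConstantCurvature

/-- The curvature tensor has the form `R(x,y,z,u) = κ (g(x,z) g(y,u) - g(x,u) g(y,z))`, i.e. the
quotient `R(x,y,x,y) / (g(x,x) g(y,y) - g(x,y)²)` is constantly `κ`. With the sign convention used
for `Rten`, hyperbolic space has `κ > 0`. -/
def HasConstantCurvature (br nabla : V → V → V) (κ : ℝ) : Prop :=
  ∀ x y z u, Rten br nabla x y z u = κ * (ip x z * ip y u - ip x u * ip y z)

lemma gram_ne_zero_of_linearIndependent {x y : V} (h : LinearIndependent ℝ ![x, y]) :
    ip x x * ip y y - ip x y ^ 2 ≠ 0 := by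
  have lagrange : ip x x * ip y y - ip x y ^ 2 = x ⨯₃ y ⬝ᵥ x ⨯₃ y := by
    rw [cross_dot_cross, dotProduct_comm y x, sq]
    rfl
  rw [lagrange, ne_eq, dotProduct_self_eq_zero]
  exact crossProduct_ne_zero_iff_linearIndependent.mpr h

namespace HasConstantCurvature

variable {br nabla : V → V → V} {κ : ℝ}

lemma sectional (h : HasConstantCurvature br nabla κ) {x y : V}
    (hxy : LinearIndependent ℝ ![x, y]) :
    Rten br nabla x y x y / (ip x x * ip y y - ip x y ^ 2) = κ := by
  rw [h, div_eq_iff (gram_ne_zero_of_linearIndependent hxy), ip_eq_dotProduct y x,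
    dotProduct_comm, ← ip_eq_dotProduct, sq]

lemma Rten_e (h : HasConstantCurvature br nabla κ) {i j : Fin 3} (hij : i ≠ j) :
    Rten br nabla (e i) (e j) (e i) (e j) = κ := by
  simp [h (e i), ip_eq_dotProduct, e_dotProduct_e, hij]

lemma ricci_eq (h : HasConstantCurvature br nabla κ) (x y : V) :
    ricci br nabla x y = -2 * κ * ip x y := by
  calc ricci br nabla x y
      = κ * (∑ i, (x ⬝ᵥ e i) * (e i ⬝ᵥ y) - ∑ i : Fin 3, (e i ⬝ᵥ e i) * (x ⬝ᵥ y)) := by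
        simp only [ricci, h (e _), ip_eq_dotProduct, ← Finset.mul_sum, Finset.sum_sub_distrib,
          mul_comm (e _ ⬝ᵥ y)]
    _ = -2 * κ * ip x y := by
        rw [sum_dotProduct_e_mul_e_dotProduct, ip_eq_dotProduct]
        simp only [e_dotProduct_e, if_true, Fin.sum_univ_three]
        ring

lemma scalc_eq (h : HasConstantCurvature br nabla κ) : scalc br nabla = -6 * κ := by
  simp only [scalc, h.ricci_eq, ip_eq_dotProduct, e_dotProduct_e, if_true, Fin.sum_univ_three]
  ring

lemma einstein (h : HasConstantCurvature br nabla κ) (x y : V) :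
    ricci br nabla x y = scalc br nabla / 3 * ip x y := by
  rw [h.ricci_eq, h.scalc_eq]
  ring

end HasConstantCurvature

end ConstantCurvature

section Semidirect

/-- The bracket of the semidirect product of a line with `w⊥`, on which a vector `x` acts by
`g(w, x) (A - c)`. For `A` skew-adjoint with `A w = 0` the action is by infinitesimal
similarities. -/
def semidirectBracket (w : V) (c : ℝ) (A : V →ₗ[ℝ] V) (x y : V) : V :=
  (w ⬝ᵥ x) • (A y - c • y) - (w ⬝ᵥ y) • (A x - c • x)

/-- The Levi-Civita connection of `semidirectBracket w c A` for skew-adjoint `A`; see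
`koszul_semidirectConnection`. -/
def semidirectConnection (w : V) (c : ℝ) (A : V →ₗ[ℝ] V) (x y : V) : V :=
  (w ⬝ᵥ x) • A y + c • ((w ⬝ᵥ y) • x - (x ⬝ᵥ y) • w)

variable {w : V} {c : ℝ} {A : V →ₗ[ℝ] V}

lemma skew_semidirectBracket : Skew (semidirectBracket w c A) :=
  fun _ _ => (neg_sub _ _).symm

lemma bilin_semidirectBracket : Bilin (semidirectBracket w c A) := by
  constructor <;> intro a x y z <;>
    simp only [semidirectBracket, map_add, map_smul, dotProduct_add, dotProduct_smul,
      smul_eq_mul] <;> module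

lemma bilin_semidirectConnection : Bilin (semidirectConnection w c A) := by
  constructor <;> intro a x y z <;>
    simp only [semidirectConnection, map_add, map_smul, dotProduct_add, dotProduct_smul,
      add_dotProduct, smul_dotProduct, smul_eq_mul] <;> module

lemma dotProduct_map_eq_zero (hA : ∀ x y, A x ⬝ᵥ y = -(x ⬝ᵥ A y)) (hw : A w = 0) (x : V) :
    w ⬝ᵥ A x = 0 := by
  rw [← neg_eq_zero, ← hA, hw, zero_dotProduct]

lemma dotProduct_semidirectBracket (hA : ∀ x, w ⬝ᵥ A x = 0) (x y : V) :
    w ⬝ᵥ semidirectBracket w c A x y = 0 := by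
  simp only [semidirectBracket, dotProduct_sub, dotProduct_smul, hA, smul_eq_mul]
  ring

lemma jacobi_semidirectBracket (hA : ∀ x, w ⬝ᵥ A x = 0) : Jacobi (semidirectBracket w c A) := by
  have nested (x y z : V) : semidirectBracket w c A x (semidirectBracket w c A y z) =
      (w ⬝ᵥ x) • (A (semidirectBracket w c A y z) - c • semidirectBracket w c A y z) := by
    rw [semidirectBracket, dotProduct_semidirectBracket hA, zero_smul, sub_zero]
  intro x y z
  simp only [nested]
  simp only [semidirectBracket, map_sub, map_smul]
  module

lemma semidirectConnection_dotProduct (hA : ∀ x y, A x ⬝ᵥ y = -(x ⬝ᵥ A y)) (x y z : V) :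
    semidirectConnection w c A x y ⬝ᵥ z = -(y ⬝ᵥ semidirectConnection w c A x z) := by
  simp only [semidirectConnection, add_dotProduct, sub_dotProduct, smul_dotProduct,
    dotProduct_add, dotProduct_sub, dotProduct_smul, smul_eq_mul, hA, dotProduct_comm y w,
    dotProduct_comm y x]
  ring

lemma koszul_semidirectConnection (hA : ∀ x y, A x ⬝ᵥ y = -(x ⬝ᵥ A y)) :
    Koszul (semidirectBracket w c A) (semidirectConnection w c A) := by
  have hA' (x y : V) : A x ⬝ᵥ y = -(A y ⬝ᵥ x) := by rw [hA, dotProduct_comm]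
  intro i j k
  simp only [ip_eq_dotProduct, semidirectBracket, semidirectConnection, add_dotProduct,
    sub_dotProduct, smul_dotProduct, smul_eq_mul, hA' (e k), hA' (e j) (e i),
    dotProduct_comm (e k), dotProduct_comm (e j) (e i)]
  ring

lemma hasConstantCurvature_semidirect (hA : ∀ x y, A x ⬝ᵥ y = -(x ⬝ᵥ A y)) (hw : A w = 0) :
    HasConstantCurvature (semidirectBracket w c A) (semidirectConnection w c A)
      (c ^ 2 * (w ⬝ᵥ w)) := by
  have hwA := dotProduct_map_eq_zero hA hw
  have curvature_operator (x y z : V) :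
      Rop (semidirectBracket w c A) (semidirectConnection w c A) x y z =
        (c ^ 2 * (w ⬝ᵥ w)) • ((x ⬝ᵥ z) • y - (y ⬝ᵥ z) • x) := by
    rw [Rop, semidirectConnection.eq_def w c A (semidirectBracket w c A x y),
      dotProduct_semidirectBracket hwA]
    simp only [semidirectConnection, semidirectBracket, map_add, map_sub, map_smul, hw, hwA, hA,
      sub_dotProduct, smul_dotProduct, dotProduct_add, dotProduct_sub,
      dotProduct_smul, smul_eq_mul, dotProduct_comm y x, dotProduct_comm x w, dotProduct_comm y w]
    module
  intro x y z u
  simp only [Rten, curvature_operator, ip_eq_dotProduct, smul_dotProduct, sub_dotProduct,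
    smul_eq_mul]
  ring

end Semidirect

section FundamentalTensor

lemma one_dotProduct_e (i : Fin 3) : (1 : V) ⬝ᵥ e i = 1 := by
  rw [dotProduct_e, Pi.one_apply]

lemma one_dotProduct_one_eq_three : (1 : V) ⬝ᵥ 1 = 3 := by simp

lemma gtil_eq (x y : V) : gtil x y = (1 ⬝ᵥ x) * (1 ⬝ᵥ y) - x ⬝ᵥ y := by
  have Qv_apply (v : V) : Qv v 0 = v 2 ∧ Qv v 1 = v 0 ∧ Qv v 2 = v 1 := ⟨rfl, rfl, rfl⟩
  simp only [gtil, ip, dotProduct, Fin.sum_univ_three, Qv_apply, Pi.one_apply]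
  ring

lemma Fop_eq_of_metric {nabla : V → V → V}
    (h : ∀ x y z, nabla x y ⬝ᵥ z = -(y ⬝ᵥ nabla x z)) (x y z : V) :
    Fop nabla x y z =
      -((1 ⬝ᵥ nabla x y) * (1 ⬝ᵥ z)) - (1 ⬝ᵥ y) * (1 ⬝ᵥ nabla x z) := by
  rw [Fop, gtil_eq, gtil_eq, h]
  ring

variable {c : ℝ} {A : V →ₗ[ℝ] V}

lemma Fop_semidirectConnection (hA : ∀ x y, A x ⬝ᵥ y = -(x ⬝ᵥ A y)) (h1 : A 1 = 0) (x y z : V) :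
    Fop (semidirectConnection 1 c A) x y z =
      c * (3 * (x ⬝ᵥ y) * (1 ⬝ᵥ z) + 3 * (x ⬝ᵥ z) * (1 ⬝ᵥ y)
        - 2 * (1 ⬝ᵥ x) * (1 ⬝ᵥ y) * (1 ⬝ᵥ z)) := by
  have one_dotProduct_connection (x y : V) : 1 ⬝ᵥ semidirectConnection 1 c A x y =
      c * ((1 ⬝ᵥ x) * (1 ⬝ᵥ y) - 3 * (x ⬝ᵥ y)) := by
    simp only [semidirectConnection, dotProduct_add, dotProduct_sub, dotProduct_smul, smul_eq_mul,
      dotProduct_map_eq_zero hA h1, one_dotProduct_one_eq_three]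
    ring
  rw [Fop_eq_of_metric (semidirectConnection_dotProduct hA), one_dotProduct_connection,
    one_dotProduct_connection]
  ring

lemma Fop_semidirectConnection_e (hA : ∀ x y, A x ⬝ᵥ y = -(x ⬝ᵥ A y)) (h1 : A 1 = 0)
    (i j k : Fin 3) :
    Fop (semidirectConnection 1 c A) (e i) (e j) (e k) =
      c * (3 * (if i = j then 1 else 0) + 3 * (if i = k then 1 else 0) - 2) := by
  simp only [Fop_semidirectConnection hA h1, one_dotProduct_e, e_dotProduct_e, mul_one]

lemma lee_semidirectConnection (hA : ∀ x y, A x ⬝ᵥ y = -(x ⬝ᵥ A y)) (h1 : A 1 = 0) (k : Fin 3) :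
    lee (semidirectConnection 1 c A) k = 6 * c := by
  simp only [lee, Fop_semidirectConnection_e hA h1, if_true, ← Finset.mul_sum,
    Finset.sum_sub_distrib, Finset.sum_add_distrib, Finset.sum_ite_eq', Finset.mem_univ,
    Fin.sum_univ_three]
  ring

lemma leeStar_semidirectConnection (hA : ∀ x y, A x ⬝ᵥ y = -(x ⬝ᵥ A y)) (h1 : A 1 = 0)
    (k : Fin 3) : leeStar (semidirectConnection 1 c A) k = -3 * c := by
  have ne_succ (i : Fin 3) : i ≠ i + 1 := by decide +revert
  simp only [leeStar, Qv_e, Fop_semidirectConnection_e hA h1, ne_succ, if_false, if_true,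
    ← Finset.mul_sum, Finset.sum_sub_distrib, Finset.sum_add_distrib, Finset.sum_ite_eq',
    Finset.mem_univ, Fin.sum_univ_three]
  ring

end FundamentalTensor

section CaseB

/-- The infinitesimal rotation `v ↦ -(λ₁ + λ₂)/2 · (1,1,1) × v`, which is the map `A` for the
bracket of case B. -/
noncomputable def caseBRotation (l1 l2 : ℝ) : V →ₗ[ℝ] V := (-(l1 + l2) / 2) • crossProduct 1

lemma caseBRotation_skewAdjoint (l1 l2 : ℝ) (x y : V) :
    caseBRotation l1 l2 x ⬝ᵥ y = -(x ⬝ᵥ caseBRotation l1 l2 y) := by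
  have cross_skew : 1 ⨯₃ x ⬝ᵥ y = -(x ⬝ᵥ 1 ⨯₃ y) := by
    rw [dotProduct_comm, triple_product_permutation, triple_product_permutation,
      ← cross_anticomm, dotProduct_neg]
  simp only [caseBRotation, LinearMap.smul_apply, smul_dotProduct, dotProduct_smul, cross_skew,
    smul_neg]

lemma caseBRotation_one (l1 l2 : ℝ) : caseBRotation l1 l2 1 = 0 := by
  rw [caseBRotation, LinearMap.smul_apply, cross_self, smul_zero]

lemma eq_semidirectBracket_of_caseB {br : V → V → V} (hbil : Bilin br) (hskew : Skew br)
    {l1 l2 : ℝ}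
    (h12 : br (e 0) (e 1) = l1 • e 0 + l2 • e 1 - (l1 + l2) • e 2)
    (h23 : br (e 1) (e 2) = -(l1 + l2) • e 0 + l1 • e 1 + l2 • e 2)
    (h13 : br (e 0) (e 2) = -l2 • e 0 + (l1 + l2) • e 1 - l1 • e 2) :
    br = semidirectBracket 1 ((l1 - l2) / 2) (caseBRotation l1 l2) := by
  have one_cross_e : 1 ⨯₃ e 0 = e 1 - e 2 ∧ 1 ⨯₃ e 1 = e 2 - e 0 ∧ 1 ⨯₃ e 2 = e 0 - e 1 := by
    refine ⟨?_, ?_, ?_⟩ <;> ext k <;> fin_cases k <;> simp [cross_apply, e_apply]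
  obtain ⟨cross0, cross1, cross2⟩ := one_cross_e
  refine hbil.ext_of_skew bilin_semidirectBracket hskew skew_semidirectBracket fun i j hij => ?_
  simp only [semidirectBracket, caseBRotation, LinearMap.smul_apply, one_dotProduct_e]
  obtain ⟨rfl, rfl⟩ | ⟨rfl, rfl⟩ | ⟨rfl, rfl⟩ :
      i = 0 ∧ j = 1 ∨ i = 0 ∧ j = 2 ∨ i = 1 ∧ j = 2 := by omega
  · rw [h12, cross0, cross1]; module
  · rw [h13, cross0, cross2]; module
  · rw [h23, cross1, cross2]; module

end CaseB

/-- Case B: for the bracket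
`[x₁,x₂] = λ₁x₁ + λ₂x₂ − (λ₁+λ₂)x₃`, `[x₂,x₃] = −(λ₁+λ₂)x₁ + λ₁x₂ + λ₂x₃`,
`[x₁,x₃] = −λ₂x₁ + (λ₁+λ₂)x₂ − λ₁x₃`: the Jacobi identity holds; the diagonal
components of `F` and the Lee forms are as stated; the basic curvature components
equal `(3/4)(λ₁ − λ₂)²`; `ρ = (τ/3)g` with `τ = −(9/2)(λ₁ − λ₂)²` (Einstein); and
every 2-plane has sectional curvature `(3/4)(λ₁ − λ₂)²`. -/
theorem case_B_properties
    (br : V → V → V) (hbil : Bilin br) (hskew : Skew br)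
    (nabla : V → V → V) (hnbil : Bilin nabla) (hkos : Koszul br nabla)
    (l1 l2 : ℝ)
    (h12 : br (e 0) (e 1) = l1 • e 0 + l2 • e 1 - (l1 + l2) • e 2)
    (h23 : br (e 1) (e 2) = -(l1 + l2) • e 0 + l1 • e 1 + l2 • e 2)
    (h13 : br (e 0) (e 2) = -l2 • e 0 + (l1 + l2) • e 1 - l1 • e 2) :
    -- (1) the Jacobi identity holds
    Jacobi br ∧
    -- (2) fundamental tensor and Lee forms
    (Fop nabla (e 0) (e 0) (e 0) = 2 * (l1 - l2) ∧
     Fop nabla (e 1) (e 1) (e 1) = 2 * (l1 - l2) ∧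
     Fop nabla (e 2) (e 2) (e 2) = 2 * (l1 - l2) ∧
     (∀ k : Fin 3, lee nabla k = 3 * (l1 - l2)) ∧
     (∀ k : Fin 3, leeStar nabla k = (3/2) * (l2 - l1))) ∧
    -- (3) curvature components
    (Rten br nabla (e 0) (e 1) (e 0) (e 1) = (3/4) * (l1 - l2)^2 ∧
     Rten br nabla (e 0) (e 2) (e 0) (e 2) = (3/4) * (l1 - l2)^2 ∧
     Rten br nabla (e 1) (e 2) (e 1) (e 2) = (3/4) * (l1 - l2)^2) ∧
    -- (4) Ricci tensor, scalar curvature, Einstein condition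
    ((∀ i j : Fin 3, ricci br nabla (e i) (e j) =
        if i = j then -(3/2) * (l1 - l2)^2 else 0) ∧
     scalc br nabla = -(9/2) * (l1 - l2)^2 ∧
     (∀ x y : V, ricci br nabla x y = (scalc br nabla / 3) * ip x y)) ∧
    -- (5) constant sectional curvature
    (∀ x y : V, LinearIndependent ℝ ![x, y] →
      Rten br nabla x y x y / (ip x x * ip y y - (ip x y)^2) = (3/4) * (l1 - l2)^2) := by
  have hA := caseBRotation_skewAdjoint l1 l2
  have h1 := caseBRotation_one l1 l2
  obtain rfl := eq_semidirectBracket_of_caseB hbil hskew h12 h23 h13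
  obtain rfl := hkos.unique (koszul_semidirectConnection hA) hnbil bilin_semidirectConnection
  have hK : HasConstantCurvature (semidirectBracket 1 ((l1 - l2) / 2) (caseBRotation l1 l2))
      (semidirectConnection 1 ((l1 - l2) / 2) (caseBRotation l1 l2)) (3 / 4 * (l1 - l2) ^ 2) := by
    convert hasConstantCurvature_semidirect hA h1 using 1
    rw [one_dotProduct_one_eq_three]
    ring
  have hF (i : Fin 3) : Fop (semidirectConnection 1 ((l1 - l2) / 2) (caseBRotation l1 l2))
      (e i) (e i) (e i) = 2 * (l1 - l2) := by
    rw [Fop_semidirectConnection_e hA h1, if_pos rfl]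
    ring
  refine ⟨jacobi_semidirectBracket (dotProduct_map_eq_zero hA h1),
    ⟨hF 0, hF 1, hF 2, fun k => ?_, fun k => ?_⟩,
    ⟨hK.Rten_e (by decide), hK.Rten_e (by decide), hK.Rten_e (by decide)⟩,
    ⟨fun i j => ?_, ?_, hK.einstein⟩, fun x y => hK.sectional⟩
  · rw [lee_semidirectConnection hA h1]; ring
  · rw [leeStar_semidirectConnection hA h1]; ring
  · rw [hK.ricci_eq, ip_eq_dotProduct, e_dotProduct_e, mul_ite]; split_ifs <;> ring
  · rw [hK.scalc_eq]; ring
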